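/- Let L be a frame and a_1, …, a_k complemented elements of L that are pairwise disjoint (a_i ⊓ a_j = ⊥ for i ≠ j). Then the iterated sum of pairs χ_{a_1} + ⋯ + χ_{a_k} equals χ_{a_1 ⊔ ⋯ ⊔ a_k} (equality of both components as functions ℚ → L). -/

import Mathlib

/-- A pair of maps `u, v : ℚ → L`, encoding a real-valued function on the frame `L`
via `f(p,—) = u p`, `f(—,q) = v q`. -/
structure MP (L : Type*) where
  u : ℚ → L
  v : ℚ → L

/-- The sum of two pairs. -/
noncomputable def MP.add {L : Type*} [Order.Frame L] (f g : MP L) : MP L where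
  u := fun p => ⨆ t : ℚ, f.u t ⊓ g.u (p - t)
  v := fun q => ⨆ t : ℚ, f.v t ⊓ g.v (q - t)

/-- The zero pair `𝟎`. -/
noncomputable def zeroMP (L : Type*) [Order.Frame L] : MP L where
  u := fun p => if p < 0 then ⊤ else ⊥
  v := fun q => if q ≤ 0 then ⊥ else ⊤

/-- The characteristic pair `χ_a` of a complemented element `a` with complement `ac`. -/
noncomputable def chiMP {L : Type*} [Order.Frame L] (a ac : L) : MP L where
  u := fun p => if p < 0 then ⊤ else if p < 1 then a else ⊥
  v := fun q => if q ≤ 0 then ⊥ else if q ≤ 1 then ac else ⊤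

/-- Iterated sum of a finite list of pairs. -/
noncomputable def sumMP {L : Type*} [Order.Frame L] : List (MP L) → MP L
  | [] => zeroMP L
  | [f] => f
  | f :: g :: fs => f.add (sumMP (g :: fs))

theorem chi_add_chi {L : Type*} [Order.Frame L] {a ac b bc : L} (ha : IsCompl a ac)
    (hb : IsCompl b bc) (hab : a ⊓ b = ⊥) :
    (chiMP a ac).add (chiMP b bc) = chiMP (a ⊔ b) (ac ⊓ bc) := by
  have hc : ac ⊔ bc = ⊤ := by
    have h : a ≤ bc := (hb.le_right_iff).2 (disjoint_iff.2 hab)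
    exact top_le_iff.1 (ha.sup_eq_top ▸ sup_le (h.trans le_sup_right) le_sup_left)
  simp only [MP.add, chiMP, MP.mk.injEq]
  constructor
  · funext p
    by_cases h0 : p < 0
    · rw [if_pos h0]
      refine top_le_iff.1 (le_iSup_of_le (p / 2) ?_)
      rw [if_pos (by linarith), if_pos (by linarith)]
      simp
    rw [if_neg h0]
    by_cases h1 : p < 1
    · rw [if_pos h1]
      apply le_antisymm
      · refine iSup_le fun t => ?_
        by_cases ht : t < 0
        · rw [if_neg (by linarith : ¬ p - t < 0)]
          refine inf_le_right.trans ?_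
          split_ifs <;> simp
        · rw [if_neg ht]
          refine inf_le_left.trans ?_
          split_ifs <;> simp
      · refine sup_le (le_iSup_of_le (p + (1 - p) / 2) ?_) (le_iSup_of_le (-((1 - p) / 2)) ?_)
        · rw [if_neg (by linarith), if_pos (by linarith), if_pos (by linarith)]
          simp
        · rw [if_pos (by linarith), if_neg (by linarith), if_pos (by linarith)]
          simp
    · rw [if_neg h1]
      refine le_bot_iff.1 (iSup_le fun t => ?_)
      by_cases ht : t < 0
      · rw [if_neg (by linarith : ¬ p - t < 0), if_neg (by linarith : ¬ p - t < 1)]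
        simp
      · rw [if_neg ht]
        by_cases ht1 : t < 1
        · rw [if_pos ht1, if_neg (by linarith : ¬ p - t < 0)]
          split_ifs
          · exact hab.le
          · simp
        · rw [if_neg ht1]
          simp
  · funext q
    by_cases h0 : q ≤ 0
    · rw [if_pos h0]
      refine le_bot_iff.1 (iSup_le fun t => ?_)
      by_cases ht : t ≤ 0
      · rw [if_pos ht]
        simp
      · rw [if_pos (by linarith : q - t ≤ 0)]
        simp
    rw [if_neg h0]
    by_cases h1 : q ≤ 1
    · rw [if_pos h1]
      apply le_antisymm
      · refine iSup_le fun t => ?_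
        by_cases ht : t ≤ 0
        · rw [if_pos ht]
          simp
        by_cases ht' : q - t ≤ 0
        · rw [if_pos ht']
          simp
        rw [if_neg ht, if_neg ht', if_pos (by linarith), if_pos (by linarith)]
      · refine le_iSup_of_le (q / 2) ?_
        rw [if_neg (by linarith), if_pos (by linarith), if_neg (by linarith),
          if_pos (by linarith)]
    · rw [if_neg h1]
      refine top_le_iff.1 (hc ▸ sup_le (le_iSup_of_le (min 1 ((q - 1) / 2)) ?_)
        (le_iSup_of_le (q - min 1 ((q - 1) / 2)) ?_))
      all_goals
        have e1 : min 1 ((q - 1) / 2) ≤ 1 := min_le_left _ _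
        have e2 : min 1 ((q - 1) / 2) ≤ (q - 1) / 2 := min_le_right _ _
        have e3 : 0 < min 1 ((q - 1) / 2) := lt_min one_pos (by linarith)
        generalize min 1 ((q - 1) / 2) = m at *
      · rw [if_neg (by linarith), if_pos (by linarith), if_neg (by linarith),
          if_neg (by linarith)]
        simp
      · rw [if_neg (by linarith), if_neg (by linarith), if_neg (by linarith),
          if_pos (by linarith)]
        simp

theorem sum_chi_aux {L : Type*} [Order.Frame L] (n : ℕ)
    (a ac : Fin (n + 1) → L) (ha : ∀ i, IsCompl (a i) (ac i))
    (hdisj : ∀ i j, i ≠ j → a i ⊓ a j = ⊥) :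
    ∃ c, IsCompl (⨆ i, a i) c ∧
      sumMP (List.ofFn fun i => chiMP (a i) (ac i)) = chiMP (⨆ i, a i) c := by
  induction n with
  | zero =>
    have h : (⨆ i, a i) = a 0 := by
      refine le_antisymm (iSup_le fun i => ?_) (le_iSup a 0)
      rw [Fin.fin_one_eq_zero i]
    exact ⟨ac 0, h ▸ ha 0, by rw [h]; simp [sumMP]⟩
  | succ n ih =>
    obtain ⟨c, hc, he⟩ := ih (fun i => a i.succ) (fun i => ac i.succ) (fun i => ha _)
      (fun i j hij => hdisj _ _ (fun h => hij (Fin.succ_injective _ h)))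
    have h : (⨆ i, a i) = a 0 ⊔ ⨆ i : Fin (n + 1), a i.succ := by
      apply le_antisymm
      · refine iSup_le fun i => ?_
        refine Fin.cases le_sup_left (fun j => ?_) i
        exact le_sup_of_le_right (le_iSup (fun i : Fin (n + 1) => a i.succ) j)
      · exact sup_le (le_iSup a 0) (iSup_le fun i => le_iSup a i.succ)
    refine ⟨ac 0 ⊓ c, h ▸ (ha 0).sup_inf hc, ?_⟩
    rw [h, ← chi_add_chi (ha 0) hc, ← he]
    · rw [List.ofFn_succ, List.ofFn_succ, sumMP]
    · rw [inf_iSup_eq]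
      simp only [iSup_eq_bot]
      exact fun i => hdisj _ _ (Fin.succ_ne_zero i).symm

/-- For pairwise disjoint complemented elements `a 1, …, a k`,
`χ_{a 1} + ⋯ + χ_{a k} = χ_{a 1 ⊔ ⋯ ⊔ a k}`. -/
theorem sum_chi_disjoint {L : Type*} [Order.Frame L] (k : ℕ) (hk : 0 < k)
    (a ac : Fin k → L) (ha : ∀ i, IsCompl (a i) (ac i))
    (hdisj : ∀ i j, i ≠ j → a i ⊓ a j = ⊥)
    (s sc : L) (hs : s = ⨆ i, a i) (hsc : IsCompl s sc) :
    sumMP (List.ofFn fun i => chiMP (a i) (ac i)) = chiMP s sc := by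
  obtain ⟨n, rfl⟩ : ∃ n, k = n + 1 := ⟨k - 1, by omega⟩
  obtain ⟨c, hc, he⟩ := sum_chi_aux n a ac ha hdisj
  subst hs
  rw [he, hsc.right_unique hc]
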